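/- Let K be a nontrivial commutative ring and n ≥ 1. Write e_1, …, e_n for the standard basis of K^n and r_i = r_{e_i}. Then the image in U(K^n) of the product r_1·r_2·⋯·r_n is nonzero. -/

import Mathlib

/-!
Universal enveloping algebra of the abelian alternative algebra `K^n`.

`T = Tens_K(K^n ⊕ K^n)`; `l_a` (resp. `r_a`) is the image of `(a,0)` (resp. `(0,a)`).
`U(K^n)` is the quotient of `T` by the two-sided ideal generated by
`l_a·l_a`, `r_a·r_a`, `l_b·l_a + r_a·r_b`, `r_b·l_a − l_a·r_b − r_a·r_b`.
-/

noncomputable section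

/-- `l_a ∈ Tens_K(K^n ⊕ K^n)`. -/
def lT (K : Type) [CommRing K] (n : ℕ) (a : Fin n → K) :
    TensorAlgebra K ((Fin n → K) × (Fin n → K)) :=
  TensorAlgebra.ι K (a, 0)

/-- `r_a ∈ Tens_K(K^n ⊕ K^n)`. -/
def rT (K : Type) [CommRing K] (n : ℕ) (a : Fin n → K) :
    TensorAlgebra K ((Fin n → K) × (Fin n → K)) :=
  TensorAlgebra.ι K (0, a)

/-- The relations defining `U(K^n)`: quotienting by this relation is the same as
quotienting by the two-sided ideal generated by the listed elements. -/
inductive URel (K : Type) [CommRing K] (n : ℕ) :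
    TensorAlgebra K ((Fin n → K) × (Fin n → K)) →
    TensorAlgebra K ((Fin n → K) × (Fin n → K)) → Prop
  | ll (a : Fin n → K) : URel K n (lT K n a * lT K n a) 0
  | rr (a : Fin n → K) : URel K n (rT K n a * rT K n a) 0
  | llrr (a b : Fin n → K) : URel K n (lT K n b * lT K n a + rT K n a * rT K n b) 0
  | rl (a b : Fin n → K) :
      URel K n (rT K n b * lT K n a - lT K n a * rT K n b - rT K n a * rT K n b) 0

/-- The universal enveloping algebra `U(K^n)`. -/
def Ualg (K : Type) [CommRing K] (n : ℕ) : Type := RingQuot (URel K n)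

instance (K : Type) [CommRing K] (n : ℕ) : Ring (Ualg K n) :=
  inferInstanceAs (Ring (RingQuot (URel K n)))

instance (K : Type) [CommRing K] (n : ℕ) : Algebra K (Ualg K n) :=
  inferInstanceAs (Algebra K (RingQuot (URel K n)))

/-- Image of `l_a` in `U(K^n)`. -/
def lU (K : Type) [CommRing K] (n : ℕ) (a : Fin n → K) : Ualg K n :=
  RingQuot.mkAlgHom K (URel K n) (lT K n a)

/-- Image of `r_a` in `U(K^n)`. -/
def rU (K : Type) [CommRing K] (n : ℕ) (a : Fin n → K) : Ualg K n :=
  RingQuot.mkAlgHom K (URel K n) (rT K n a)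

/-- The weight-one part `V ⊆ U(K^n)`: the span of all `l_a` and `r_a`. -/
def V (K : Type) [CommRing K] (n : ℕ) : Submodule K (Ualg K n) :=
  Submodule.span K (Set.range (lU K n) ∪ Set.range (rU K n))


/-- The standard basis vector `e_i` of `K^n`. -/
def stdBasis (K : Type) [CommRing K] (n : ℕ) (i : Fin n) : Fin n → K :=
  Pi.single i 1

/-!
If `s` and `t` are elements of a `K`-algebra `B` with `s² = t² = 1` and `t s + s t = -1`, then
`l_a ↦ a ⊗ s`, `r_a ↦ a ⊗ t` respects the defining relations of `U(K^n)` and so gives an algebra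
map `U(K^n) → Λ(K^n) ⊗ B`. It sends `r_1 ⋯ r_n` to `(e_1 ∧ ⋯ ∧ e_n) ⊗ t ^ n`, where `t ^ n` is a
unit and `e_1 ∧ ⋯ ∧ e_n` is detected by the determinant. Over any `K` one can take `B = M₂(K)`,
with `s` and `t` the images of two reflections under the two-dimensional representation of `S₃`:
there the rotation `s t` satisfies `X² + X + 1`, so that `s t + t s = s t + (s t)⁻¹ = -1`.
-/

open scoped TensorProduct

section ExteriorAlgebra

variable {R M : Type*} [CommRing R] [AddCommGroup M] [Module R M]

theorem ιMulti_basis_ne_zero [Nontrivial R] {n : ℕ} (b : Module.Basis (Fin n) R M) :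
    ExteriorAlgebra.ιMulti R n b ≠ 0 := by
  intro h
  have det_self_eq_zero : b.det b = 0 := by
    simpa only [ExteriorAlgebra.liftAlternating_apply_ιMulti, Pi.single_eq_same, map_zero] using
      congrArg (ExteriorAlgebra.liftAlternating (R := R) (Pi.single n b.det)) h
  exact one_ne_zero (b.det_self.symm.trans det_self_eq_zero)

theorem exteriorAlgebra_ι_mul_ι_swap (x y : M) :
    ExteriorAlgebra.ι R y * ExteriorAlgebra.ι R x =
      -(ExteriorAlgebra.ι R x * ExteriorAlgebra.ι R y) :=
  eq_neg_of_add_eq_zero_left (ExteriorAlgebra.ι_add_mul_swap y x)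

end ExteriorAlgebra

section TensorProduct

variable {R A B : Type*} [CommSemiring R] [Semiring A] [Algebra R A] [Semiring B] [Algebra R B]

theorem prod_ofFn_tmul {m : ℕ} (x : Fin m → A) (t : B) :
    (List.ofFn fun i => x i ⊗ₜ[R] t).prod = (List.ofFn x).prod ⊗ₜ[R] (t ^ m) := by
  induction m with
  | zero => simp [Algebra.TensorProduct.one_def]
  | succ m ih => simp [List.ofFn_succ, ih, pow_succ']

theorem eq_zero_of_tmul_eq_zero_of_isUnit (φ : B →ₗ[R] R) (hφ : φ 1 = 1) {x : A} {u : B}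
    (hu : IsUnit u) (h : x ⊗ₜ[R] u = 0) : x = 0 := by
  obtain ⟨v, huv⟩ := hu.exists_right_inv
  have tmul_one_eq_zero : x ⊗ₜ[R] (1 : B) = 0 := by
    simpa [huv] using congrArg (· * (1 : A) ⊗ₜ[R] v) h
  simpa [hφ] using congrArg ((TensorProduct.rid R A).toLinearMap ∘ₗ φ.lTensor A) tmul_one_eq_zero

end TensorProduct

theorem exists_matrix_involutions_anticomm_eq_neg_one (R : Type*) [CommRing R] :
    ∃ s t : Matrix (Fin 2) (Fin 2) R, s * s = 1 ∧ t * t = 1 ∧ t * s + s * t = -1 := by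
  refine ⟨!![-1, -1; 0, 1], !![0, 1; 1, 0], ?_, ?_, ?_⟩ <;> simp [Matrix.one_fin_two]

namespace Ualg

variable {K : Type} [CommRing K] {n : ℕ}

section Lift

variable {A : Type*} [Ring A] [Algebra K A] (l r : (Fin n → K) →ₗ[K] A)
  (hll : ∀ a, l a * l a = 0) (hrr : ∀ a, r a * r a = 0)
  (hllrr : ∀ a b, l b * l a + r a * r b = 0)
  (hrl : ∀ a b, r b * l a - l a * r b - r a * r b = 0)

/-- The universal property of `U(K^n)`: linear maps `l` and `r` into an algebra that satisfy the
defining relations induce an algebra map with `l_a ↦ l a` and `r_a ↦ r a`. -/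
def lift : Ualg K n →ₐ[K] A :=
  RingQuot.liftAlgHom K ⟨TensorAlgebra.lift K (l.coprod r), by
    rintro _ _ (a | a | ⟨a, b⟩ | ⟨a, b⟩) <;> simp [lT, rT, hll, hrr, hllrr, hrl]⟩

theorem lift_rU (a : Fin n → K) : lift l r hll hrr hllrr hrl (rU K n a) = r a := by
  refine (RingQuot.liftAlgHom_mkAlgHom_apply K _ _ _).trans ?_
  simp [rT]

end Lift

section ExteriorTensor

variable {B : Type*} [Ring B] [Algebra K B] {s t : B}
  (hs : s * s = 1) (ht : t * t = 1) (hts : t * s + s * t = -1)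

/-- The algebra map `U(K^n) → Λ(K^n) ⊗ B` with `l_a ↦ a ⊗ s` and `r_a ↦ a ⊗ t`, for involutions
`s` and `t` of `B` with `t s + s t = -1`. -/
def toExteriorTensor : Ualg K n →ₐ[K] ExteriorAlgebra K (Fin n → K) ⊗[K] B :=
  lift ((TensorProduct.mk K _ B).flip s ∘ₗ ExteriorAlgebra.ι K)
    ((TensorProduct.mk K _ B).flip t ∘ₗ ExteriorAlgebra.ι K)
    (fun a => by simp) (fun a => by simp)
    (fun a b => by simp [hs, ht, ← TensorProduct.add_tmul])
    (fun a b => by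
      have hts' : t * s = -1 - s * t := eq_sub_of_add_eq hts
      simp [ht, hts', exteriorAlgebra_ι_mul_ι_swap a b, TensorProduct.neg_tmul,
        TensorProduct.tmul_sub, TensorProduct.tmul_neg])

theorem toExteriorTensor_rU (a : Fin n → K) :
    toExteriorTensor hs ht hts (rU K n a) = ExteriorAlgebra.ι K a ⊗ₜ[K] t :=
  lift_rU ..

theorem toExteriorTensor_prod_rU {m : ℕ} (a : Fin m → Fin n → K) :
    toExteriorTensor hs ht hts (List.ofFn fun i => rU K n (a i)).prod =
      ExteriorAlgebra.ιMulti K m a ⊗ₜ[K] (t ^ m) := by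
  rw [map_list_prod, List.map_ofFn, ExteriorAlgebra.ιMulti_apply, ← prod_ofFn_tmul]
  simp only [Function.comp_def, toExteriorTensor_rU]

end ExteriorTensor

theorem ιMulti_eq_zero_of_prod_rU_eq_zero {m : ℕ} {a : Fin m → Fin n → K}
    (h : (List.ofFn fun i => rU K n (a i)).prod = 0) : ExteriorAlgebra.ιMulti K m a = 0 := by
  obtain ⟨s, t, hs, ht, hts⟩ := exists_matrix_involutions_anticomm_eq_neg_one K
  have unit_pow : IsUnit (t ^ m) := (IsUnit.of_mul_eq_one t ht).pow m
  apply eq_zero_of_tmul_eq_zero_of_isUnit (Matrix.entryLinearMap K K 0 0) (by simp) unit_pow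
  rw [← toExteriorTensor_prod_rU hs ht hts, h, map_zero]

end Ualg

/-- For `K` nontrivial and `n ≥ 1`, the product `r_1 r_2 ⋯ r_n` of the images of the
standard basis vectors is nonzero in `U(K^n)`. -/
theorem prod_r_ne_zero (K : Type) [CommRing K] [Nontrivial K] (n : ℕ) (hn : 1 ≤ n) :
    (List.ofFn fun i : Fin n => rU K n (stdBasis K n i)).prod ≠ 0 := by
  intro h
  apply ιMulti_basis_ne_zero (Pi.basisFun K (Fin n))
  have basis_eq : ⇑(Pi.basisFun K (Fin n)) = stdBasis K n :=
    funext (Pi.basisFun_apply K (Fin n))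
  rw [basis_eq]
  exact Ualg.ιMulti_eq_zero_of_prod_rU_eq_zero h

end
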